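/- Let 0 < α < 1. There exists a constant C > 0 (depending only on α) such that for every λ > 0 and all 0 < s < t, |t^{α-1} E_{α,α}(-λ t^α) - s^{α-1} E_{α,α}(-λ s^α)| ≤ C ∫_s^t r^{α-2}/(1 + λ r^α) dr. -/

import Mathlib

open Real intervalIntegral

/-- The two-parameter Mittag-Leffler function (real arguments),
with the convention `1/Γ = 0` at the poles of `Γ` (as in Mathlib's `Real.Gamma`). -/
noncomputable def mittagLeffler (α β x : ℝ) : ℝ :=
  ∑' k : ℕ, x ^ k / Real.Gamma ((k : ℝ) * α + β)

/-! Let `F t = t ^ (α - 1) * E_{α,α}(-lam * t ^ α)`, `k t = t ^ (α - 1) / Γ α`, and let `∗` be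
the convolution over `(0, t)`. Integrating the series term by term (Beta integrals) gives
`F + lam • (k ∗ F) = k` and `t F' = (α - 1) F - α lam (F ∗ F)`.

The kernel `k` is positive and log-convex, which forces `F > 0`: at a first zero `t` of `F` the
history of `F` up to a slightly earlier time `a` contributes at least `(k t / k a) F a`, more than
what is lost on `(a, t)`. Hence `F ≤ k`; moreover `lam ∫₀ᵗ F ≤ 1` because `k` is decreasing, and the
formula for `F'` shows that `F` is decreasing, so that `lam t F t ≤ 1`. Together the two bounds give
`t F t ≤ C t ^ α / (1 + lam t ^ α)`. Finally, splitting `F ∗ F` at `t / 2` yields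
`lam (F ∗ F) t ≤ 2 F (t / 2)`, so `t |F' t| ≤ 2 F (t / 2)`, and the estimate follows by integrating
`|F'|` over `(s, t)`. -/

open MeasureTheory Set Filter Topology
open Finset.HasAntidiagonal (antidiagonal mem_antidiagonal)

/-! ### Volterra resolvents of log-convex kernels -/

lemma add_le_add_of_convexOn {S : Set ℝ} {φ : ℝ → ℝ} (hφ : ConvexOn ℝ S φ) {x y h : ℝ}
    (hx : x ∈ S) (hyh : y + h ∈ S) (hxy : x ≤ y) (hh : 0 ≤ h) :
    φ (x + h) + φ y ≤ φ x + φ (y + h) := by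
  rcases (by linarith : x ≤ y + h).eq_or_lt with heq | hlt
  · obtain rfl : h = 0 := by linarith
    simp
  have hL : 0 < y + h - x := sub_pos.2 hlt
  have hw : (y - x) / (y + h - x) + h / (y + h - x) = 1 := by field_simp; ring
  have h₁ := hφ.2 hx hyh (div_nonneg (sub_nonneg.2 hxy) hL.le) (div_nonneg hh hL.le) hw
  have h₂ := hφ.2 hx hyh (div_nonneg hh hL.le) (div_nonneg (sub_nonneg.2 hxy) hL.le)
    ((add_comm _ _).trans hw)
  simp only [smul_eq_mul] at h₁ h₂
  rw [show (y - x) / (y + h - x) * x + h / (y + h - x) * (y + h) = x + h by field_simp; ring] at h₁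
  rw [show h / (y + h - x) * x + (y - x) / (y + h - x) * (y + h) = y by field_simp; ring] at h₂
  linear_combination h₁ + h₂ + (φ x + φ (y + h)) * hw

lemma mul_le_mul_of_convexOn_log {S : Set ℝ} {k : ℝ → ℝ} (hk : ConvexOn ℝ S (log ∘ k))
    (hpos : ∀ x ∈ S, 0 < k x) {x y h : ℝ} (hx : x ∈ S) (hyh : y + h ∈ S) (hxy : x ≤ y)
    (hh : 0 ≤ h) : k (x + h) * k y ≤ k x * k (y + h) := by
  have hxh : x + h ∈ S := hk.1.ordConnected.out hx hyh ⟨by linarith, by linarith⟩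
  have hy : y ∈ S := hk.1.ordConnected.out hx hyh ⟨hxy, by linarith⟩
  have hlog := add_le_add_of_convexOn hk hx hyh hxy hh
  simp only [Function.comp_apply] at hlog
  rwa [← log_mul (hpos _ hxh).ne' (hpos _ hy).ne', ← log_mul (hpos _ hx).ne' (hpos _ hyh).ne',
    log_le_log_iff (mul_pos (hpos _ hxh) (hpos _ hy)) (mul_pos (hpos _ hx) (hpos _ hyh))] at hlog

lemma continuousOn_of_convexOn_log {S : Set ℝ} {k : ℝ → ℝ} (hk : ConvexOn ℝ S (log ∘ k))
    (hS : IsOpen S) (hpos : ∀ x ∈ S, 0 < k x) : ContinuousOn k S := by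
  have hlog : ContinuousOn (log ∘ k) S := by simpa [hS.interior_eq] using hk.continuousOn_interior
  exact hlog.rexp.congr fun x hx => (exp_log (hpos x hx)).symm

lemma forall_pos_of_forall_Ioo_pos {f : ℝ → ℝ} (hf : ContinuousOn f (Ioi 0))
    (hzero : ∀ᶠ t in 𝓝[>] 0, 0 < f t)
    (hstep : ∀ t, 0 < t → (∀ s ∈ Ioo 0 t, 0 < f s) → 0 < f t) {t : ℝ} (ht : 0 < t) : 0 < f t := by
  obtain ⟨ε, hε, hnear⟩ := mem_nhdsGT_iff_exists_Ioo_subset.1 hzero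
  by_contra! hft
  set N : Set ℝ := Ici ε ∩ f ⁻¹' Iic 0
  have mem_N {r : ℝ} (hr : 0 < r) (hfr : f r ≤ 0) : r ∈ N :=
    ⟨not_lt.1 fun hrε => (hnear ⟨hr, hrε⟩ : 0 < f r).not_ge hfr, hfr⟩
  have hbdd : BddBelow N := ⟨ε, fun r hr => hr.1⟩
  have hclosed : IsClosed N := (hf.mono fun r hr => lt_of_lt_of_le hε
    hr).preimage_isClosed_of_isClosed isClosed_Ici isClosed_Iic
  obtain ⟨hTε, hT⟩ : sInf N ∈ N := hclosed.csInf_mem ⟨t, mem_N ht hft⟩ hbdd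
  refine (hstep (sInf N) (lt_of_lt_of_le hε hTε) fun s hs => ?_).not_ge hT
  by_contra! hfs
  exact (csInf_le hbdd (mem_N hs.1 hfs)).not_gt hs.2

lemma eventually_mul_integral_comp_sub_lt_div {k : ℝ → ℝ} {t : ℝ} (hkt : k t ≠ 0)
    (hkc : ContinuousAt k t) (hint : IntervalIntegrable k volume 0 t) (ht : 0 < t) (lam : ℝ) :
    ∀ᶠ a in 𝓝[≤] t, lam * ∫ s in a..t, k (t - s) < k t / k a := by
  have hrefl : IntegrableOn (fun s => k (t - s)) (uIcc 0 t) := by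
    rw [← intervalIntegrable_iff']
    simpa using (hint.comp_sub_left t).symm
  have hprim := (continuousOn_primitive_interval_left hrefl).const_smul lam t right_mem_uIcc
  have hquot : ContinuousAt (fun a => k t / k a) t := continuousAt_const.div hkc hkt
  rw [uIcc_of_le ht.le, ContinuousWithinAt, nhdsWithin_Icc_eq_nhdsLE ht] at hprim
  refine hprim.eventually_lt hquot.continuousWithinAt.tendsto ?_
  simp [hkt]

lemma integral_comp_sub_mul_le {k f : ℝ → ℝ} {a t M : ℝ} (hk : ∀ x ∈ Ioi 0, 0 < k x)
    (hkint : IntervalIntegrable k volume 0 t)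
    (hint : IntervalIntegrable (fun s => k (t - s) * f s) volume 0 t) (ha : 0 ≤ a) (hat : a ≤ t)
    (hM : ∀ s ∈ Ioo a t, f s ≤ M) :
    ∫ s in a..t, k (t - s) * f s ≤ M * ∫ s in a..t, k (t - s) := by
  have hrefl : IntervalIntegrable (fun s => k (t - s)) volume 0 t := by
    simpa using (hkint.comp_sub_left t).symm
  have hsub : uIcc a t ⊆ uIcc 0 t :=
    uIcc_subset_uIcc_right (by simp [uIcc_of_le (ha.trans hat), ha, hat])
  rw [← intervalIntegral.integral_const_mul]
  refine integral_mono_on_of_le_Ioo hat (hint.mono_set hsub)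
    ((hrefl.mono_set hsub).const_mul _) fun s hs => ?_
  rw [mul_comm M]
  exact mul_le_mul_of_nonneg_left (hM s hs) (hk _ (sub_pos.2 hs.2)).le

/-- `f` is the resolvent of the Volterra kernel `lam • k`, normalised so that
`f + lam • (k ∗ f) = k` with `∗` the convolution over `(0, t)`. The integrability field keeps the
convolution from being a junk value. -/
structure IsVolterraResolvent (k : ℝ → ℝ) (lam : ℝ) (f : ℝ → ℝ) : Prop where
  continuousOn : ContinuousOn f (Ioi 0)
  intervalIntegrable : ∀ t, 0 < t → IntervalIntegrable (fun s => k (t - s) * f s) volume 0 t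
  eq_sub : ∀ t, 0 < t → f t = k t - lam * ∫ s in 0..t, k (t - s) * f s

namespace IsVolterraResolvent

variable {k f : ℝ → ℝ} {lam a t : ℝ}

/- Log-convexity gives `k (t - s) ≤ (k t / k a) * k (a - s)`, which compares the convolution at
time `t`, restricted to `(0, a)`, with the convolution at time `a`. -/
lemma div_mul_sub_le (hf : IsVolterraResolvent k lam f) (hlam : 0 ≤ lam)
    (hk : ∀ x ∈ Ioi 0, 0 < k x) (hlog : ConvexOn ℝ (Ioi 0) (log ∘ k)) (ha : 0 < a) (hat : a ≤ t)
    (hnonneg : ∀ s ∈ Ioo 0 a, 0 ≤ f s) :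
    k t / k a * f a - lam * ∫ s in a..t, k (t - s) * f s ≤ f t := by
  have ht : 0 < t := ha.trans_le hat
  have hka := hk a ha
  have hint := hf.intervalIntegrable t ht
  have hint₁ : IntervalIntegrable (fun s => k (t - s) * f s) volume 0 a :=
    hint.mono_set (uIcc_subset_uIcc_left (by simp [uIcc_of_le ht.le, ha.le, hat]))
  have hint₂ : IntervalIntegrable (fun s => k (t - s) * f s) volume a t :=
    hint.mono_set (uIcc_subset_uIcc_right (by simp [uIcc_of_le ht.le, ha.le, hat]))
  have hcomp : ∫ s in 0..a, k (t - s) * f s ≤ k t / k a * ∫ s in 0..a, k (a - s) * f s := by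
    rw [← intervalIntegral.integral_const_mul]
    refine integral_mono_on_of_le_Ioo ha.le hint₁
      ((hf.intervalIntegrable a ha).const_mul _) fun s hs => ?_
    rw [← mul_assoc]
    refine mul_le_mul_of_nonneg_right ?_ (hnonneg s hs)
    rw [div_mul_eq_mul_div, le_div_iff₀ hka]
    have has : a - s ∈ Ioi 0 := sub_pos.2 hs.2
    have h := mul_le_mul_of_convexOn_log hlog hk has (y := a) (h := t - a)
      (by simpa using ht) (by linarith [hs.1]) (sub_nonneg.2 hat)
    rw [show a - s + (t - a) = t - s by ring, show a + (t - a) = t by ring] at h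
    linarith
  rw [hf.eq_sub t ht, hf.eq_sub a ha, ← integral_add_adjacent_intervals hint₁ hint₂]
  have hkt : k t / k a * k a = k t := div_mul_cancel₀ _ hka.ne'
  linarith [mul_le_mul_of_nonneg_left hcomp hlam]

theorem pos (hf : IsVolterraResolvent k lam f) (hlam : 0 ≤ lam) (hk : ∀ x ∈ Ioi 0, 0 < k x)
    (hlog : ConvexOn ℝ (Ioi 0) (log ∘ k)) (hint : ∀ t, 0 < t → IntervalIntegrable k volume 0 t)
    (hzero : ∀ᶠ t in 𝓝[>] 0, 0 < f t) (ht : 0 < t) : 0 < f t := by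
  refine forall_pos_of_forall_Ioo_pos hf.continuousOn hzero (fun t ht hpos => ?_) ht
  have hkc : ContinuousAt k t :=
    (continuousOn_of_convexOn_log hlog isOpen_Ioi hk).continuousAt (Ioi_mem_nhds ht)
  obtain ⟨b, hbt, hb⟩ := mem_nhdsLE_iff_exists_Icc_subset.1
    ((eventually_mul_integral_comp_sub_lt_div (hk t ht).ne' hkc (hint t ht) ht lam).and
      (mem_nhdsWithin_of_mem_nhds (Ioi_mem_nhds ht)))
  have hb₀ : 0 < b := (hb (left_mem_Icc.2 hbt.le)).2
  obtain ⟨a, ha, hmax⟩ := isCompact_Icc.exists_isMaxOn (nonempty_Icc.2 hbt.le)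
    (hf.continuousOn.mono fun r hr => (hb hr).2)
  obtain ⟨hsmall, ha₀⟩ := hb ha
  have hfa : 0 < f a := (hpos b ⟨hb₀, hbt⟩).trans_le (hmax (left_mem_Icc.2 hbt.le))
  have hrecent := integral_comp_sub_mul_le hk (hint t ht) (hf.intervalIntegrable t ht) ha₀.le
    ha.2 fun s hs => hmax ⟨ha.1.trans hs.1.le, hs.2.le⟩
  calc 0 < (k t / k a - lam * ∫ s in a..t, k (t - s)) * f a := mul_pos (sub_pos.2 hsmall) hfa
    _ = k t / k a * f a - lam * (f a * ∫ s in a..t, k (t - s)) := by ring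
    _ ≤ k t / k a * f a - lam * ∫ s in a..t, k (t - s) * f s := by gcongr
    _ ≤ f t := hf.div_mul_sub_le hlam hk hlog ha₀ ha.2
        fun s hs => (hpos s ⟨hs.1, hs.2.trans_le ha.2⟩).le

lemma le_kernel (hf : IsVolterraResolvent k lam f) (hlam : 0 ≤ lam) (hk : ∀ x ∈ Ioi 0, 0 < k x)
    (hnonneg : ∀ s ∈ Ioo 0 t, 0 ≤ f s) (ht : 0 < t) : f t ≤ k t := by
  have hconv : ∫ _ in 0..t, (0 : ℝ) ≤ ∫ s in 0..t, k (t - s) * f s :=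
    integral_mono_on_of_le_Ioo ht.le intervalIntegrable_const (hf.intervalIntegrable t ht)
      fun s hs => mul_nonneg (hk _ (sub_pos.2 hs.2)).le (hnonneg s hs)
  rw [intervalIntegral.integral_zero] at hconv
  rw [hf.eq_sub t ht]
  exact sub_le_self _ (mul_nonneg hlam hconv)

lemma mul_integral_le_one (hf : IsVolterraResolvent k lam f) (hlam : 0 ≤ lam)
    (hk : ∀ x ∈ Ioi 0, 0 < k x) (hanti : AntitoneOn k (Ioi 0))
    (hint : IntervalIntegrable f volume 0 t) (hnonneg : ∀ s ∈ Ioc 0 t, 0 ≤ f s) (ht : 0 < t) :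
    lam * ∫ s in 0..t, f s ≤ 1 := by
  have hmono : k t * ∫ s in 0..t, f s ≤ ∫ s in 0..t, k (t - s) * f s := by
    rw [← intervalIntegral.integral_const_mul]
    refine integral_mono_on_of_le_Ioo ht.le (hint.const_mul _) (hf.intervalIntegrable t ht)
      fun s hs => mul_le_mul_of_nonneg_right ?_ (hnonneg s ⟨hs.1, hs.2.le⟩)
    exact hanti (sub_pos.2 hs.2) ht (by linarith [hs.1])
  refine le_of_mul_le_mul_left ?_ (hk t ht)
  calc k t * (lam * ∫ s in 0..t, f s) = lam * (k t * ∫ s in 0..t, f s) := by ring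
    _ ≤ lam * ∫ s in 0..t, k (t - s) * f s := by gcongr
    _ ≤ k t * 1 := by linarith [hf.eq_sub t ht, hnonneg t ⟨ht, le_rfl⟩]

end IsVolterraResolvent

lemma integral_mul_comp_sub_le_of_antitoneOn {f : ℝ → ℝ} {t : ℝ} (ht : 0 < t)
    (hanti : AntitoneOn f (Ioi 0)) (hnonneg : ∀ s, 0 < s → 0 ≤ f s)
    (hint : IntervalIntegrable f volume 0 t)
    (hconv : IntervalIntegrable (fun s => f s * f (t - s)) volume 0 t) :
    ∫ s in 0..t, f s * f (t - s) ≤ 2 * f (t / 2) * ∫ s in 0..t, f s := by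
  have hrefl : IntervalIntegrable (fun s => f (t - s)) volume 0 t := by
    simpa using (hint.comp_sub_left t).symm
  calc ∫ s in 0..t, f s * f (t - s) ≤ ∫ s in 0..t, f (t / 2) * (f s + f (t - s)) := by
        refine integral_mono_on_of_le_Ioo ht.le hconv ((hint.add hrefl).const_mul _) fun s hs => ?_
        have hts : 0 < t - s := sub_pos.2 hs.2
        have hfs := hnonneg s hs.1
        have hfts := hnonneg (t - s) hts
        rcases le_total s (t / 2) with h | h
        · have := hanti (half_pos ht) hts (by linarith)
          nlinarith
        · have := hanti (half_pos ht) hs.1 h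
          nlinarith
    _ = 2 * f (t / 2) * ∫ s in 0..t, f s := by
        rw [intervalIntegral.integral_const_mul, intervalIntegral.integral_add hint hrefl,
          integral_comp_sub_left f t, sub_self, sub_zero]
        ring

/-! ### The Mittag-Leffler function -/

lemma rpow_mul_exp_neg_le_Gamma {s R : ℝ} (hs : 1 ≤ s) (hR : 0 ≤ R) :
    R ^ (s - 1) * exp (-R) ≤ Gamma s := by
  have hint := GammaIntegral_convergent (zero_lt_one.trans_le hs)
  calc R ^ (s - 1) * exp (-R) = ∫ x in Ioi R, exp (-x) * R ^ (s - 1) := by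
        rw [MeasureTheory.integral_mul_const, integral_exp_neg_Ioi, mul_comm]
    _ ≤ ∫ x in Ioi R, exp (-x) * x ^ (s - 1) := by
        refine setIntegral_mono_on ((integrableOn_exp_neg_Ioi R).mul_const _)
          (hint.mono_set (Ioi_subset_Ioi hR)) measurableSet_Ioi fun x hx => ?_
        have : R ≤ x := le_of_lt hx
        gcongr
    _ ≤ ∫ x in Ioi 0, exp (-x) * x ^ (s - 1) := by
        refine setIntegral_mono_set hint ?_ (Ioi_subset_Ioi hR).eventuallyLE
        filter_upwards [ae_restrict_mem measurableSet_Ioi] with x hx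
        exact mul_nonneg (exp_pos _).le (rpow_nonneg (le_of_lt hx) _)
    _ = Gamma s := (Gamma_eq_integral (zero_lt_one.trans_le hs)).symm

lemma rpow_natCast_mul_add {t : ℝ} (ht : 0 < t) (k : ℕ) (α c : ℝ) :
    t ^ (k * α + c) = (t ^ α) ^ k * t ^ c := by
  rw [rpow_add ht, mul_comm (k : ℝ), rpow_mul_natCast ht.le]

lemma mittagLeffler_zero (α β : ℝ) : mittagLeffler α β 0 = 1 / Gamma β := by
  rw [mittagLeffler, tsum_eq_single 0 fun k hk => by simp [hk]]
  simp

section MittagLeffler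

variable {α : ℝ} (hα : 0 < α) (β x : ℝ)

include hα

/- For `R ^ α = 2 * (|x| + 1)`, the bound `R ^ (k * α + β - 1) * exp (-R) ≤ Γ (k * α + β)`
makes the terms `O(2⁻ᵏ)`. -/
lemma summable_pow_div_Gamma : Summable fun k : ℕ => x ^ k / Gamma (k * α + β) := by
  set R : ℝ := (2 * (|x| + 1)) ^ α⁻¹
  have hR : 0 < R := by positivity
  have hRα : R ^ α = 2 * (|x| + 1) := rpow_inv_rpow (by positivity) hα.ne'
  obtain ⟨N, hN⟩ := exists_nat_gt ((1 - β) / α)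
  have hgeom : Summable fun k : ℕ => (R ^ (β - 1) * exp (-R))⁻¹ * (1 / 2 : ℝ) ^ k :=
    summable_geometric_two.mul_left _
  refine Summable.of_norm_bounded_eventually_nat hgeom ?_
  filter_upwards [eventually_ge_atTop N] with k hk
  have hk₁ : 1 ≤ k * α + β := by
    have hNk : (N : ℝ) ≤ k := by exact_mod_cast hk
    have := (div_lt_iff₀ hα).1 (hN.trans_le hNk)
    linarith
  have hΓ : 0 < Gamma (k * α + β) := Gamma_pos_of_pos (zero_lt_one.trans_le hk₁)
  have hbound := rpow_mul_exp_neg_le_Gamma hk₁ hR.le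
  rw [add_sub_assoc, rpow_natCast_mul_add hR, hRα] at hbound
  rw [norm_div, norm_of_nonneg hΓ.le, norm_pow, norm_eq_abs, div_le_iff₀ hΓ]
  calc |x| ^ k ≤ (|x| + 1) ^ k := by gcongr; linarith
    _ = (R ^ (β - 1) * exp (-R))⁻¹ * (1 / 2 : ℝ) ^ k *
          ((2 * (|x| + 1)) ^ k * R ^ (β - 1) * exp (-R)) := by
        rw [mul_pow, one_div, inv_pow]; field_simp
    _ ≤ (R ^ (β - 1) * exp (-R))⁻¹ * (1 / 2 : ℝ) ^ k * Gamma (k * α + β) := by gcongr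

lemma summable_add_one_mul_pow_div_Gamma :
    Summable fun k : ℕ => (k + 1) * (x ^ k / Gamma (k * α + β)) := by
  refine Summable.of_norm_bounded (summable_pow_div_Gamma hα β (2 * x)).norm fun k => ?_
  rw [mul_pow, mul_div_assoc, norm_mul, norm_mul _ (x ^ k / _)]
  gcongr
  rw [norm_of_nonneg (by positivity), norm_of_nonneg (by positivity)]
  exact_mod_cast Nat.lt_two_pow_self

lemma mittagLeffler_eq_one_div_Gamma_add :
    mittagLeffler α β x = 1 / Gamma β + x * mittagLeffler α (β + α) x := by
  rw [mittagLeffler, (summable_pow_div_Gamma hα β x).tsum_eq_zero_add, mittagLeffler,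
    ← tsum_mul_left]
  congr 1
  · simp
  · refine tsum_congr fun k => ?_
    rw [pow_succ', mul_div_assoc, Nat.cast_succ, add_one_mul (k : ℝ), add_assoc, add_comm α β]

lemma hasSum_mul_pow_sub_one_div_Gamma :
    HasSum (fun k : ℕ => k * x ^ (k - 1) / Gamma (k * α + β))
      (∑' k : ℕ, (k + 1) * (x ^ k / Gamma (k * α + (β + α)))) := by
  have hshift := (summable_add_one_mul_pow_div_Gamma hα (β + α) x).hasSum
  rw [← hasSum_nat_add_iff' 1]
  simpa [add_one_mul (_ : ℝ) α, add_assoc, add_comm α β, mul_div_assoc] using hshift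

theorem hasDerivAt_mittagLeffler :
    HasDerivAt (mittagLeffler α β)
      (∑' k : ℕ, (k + 1) * (x ^ k / Gamma (k * α + (β + α)))) x := by
  rw [← (hasSum_mul_pow_sub_one_div_Gamma hα β x).tsum_eq]
  set R : ℝ := |x| + 1
  have hx : x ∈ Ioo (-R) R := abs_lt.1 (lt_add_one |x|)
  refine hasDerivAt_tsum_of_isPreconnected (g := fun (k : ℕ) y => y ^ k / Gamma (k * α + β))
    (hasSum_mul_pow_sub_one_div_Gamma hα β R).summable.norm isOpen_Ioo isPreconnected_Ioo
    (fun k y _ => (hasDerivAt_pow k y).div_const _) (fun k y hy => ?_) hx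
    (summable_pow_div_Gamma hα β x) hx
  have hyR : |y| ≤ |R| := (abs_lt.2 hy).le.trans (le_abs_self R)
  simp only [norm_div, norm_mul, norm_pow, norm_eq_abs]
  gcongr

lemma continuous_mittagLeffler : Continuous (mittagLeffler α β) :=
  continuous_iff_continuousAt.2 fun x => (hasDerivAt_mittagLeffler hα β x).continuousAt

end MittagLeffler

/-! ### Riemann–Liouville kernels -/

/-- The kernel `t ^ (a - 1) / Γ a` of the Riemann–Liouville fractional integral of order `a`. -/
noncomputable def rlKernel (a t : ℝ) : ℝ := t ^ (a - 1) / Gamma a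

lemma integral_rpow_mul_sub_rpow {a b t : ℝ} (ha : 0 < a) (hb : 0 < b) (ht : 0 < t) :
    ∫ s in 0..t, s ^ (a - 1) * (t - s) ^ (b - 1) =
      t ^ (a + b - 1) * (Gamma a * Gamma b / Gamma (a + b)) := by
  have hcast : ((∫ s in 0..t, s ^ (a - 1) * (t - s) ^ (b - 1) : ℝ) : ℂ) =
      ∫ s in 0..t, (s : ℂ) ^ ((a : ℂ) - 1) * ((t : ℂ) - s) ^ ((b : ℂ) - 1) := by
    rw [← intervalIntegral.integral_ofReal]
    refine intervalIntegral.integral_congr fun s hs => ?_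
    rw [uIcc_of_le ht.le] at hs
    simp [Complex.ofReal_cpow hs.1, Complex.ofReal_cpow (sub_nonneg.2 hs.2)]
  refine Complex.ofReal_injective ?_
  rw [hcast, Complex.betaIntegral_scaled _ _ ht,
    Complex.betaIntegral_eq_Gamma_mul_div _ _ (by simpa) (by simpa)]
  simp [Complex.ofReal_cpow ht.le, ← Complex.Gamma_ofReal]

section RiemannLiouville

variable {a b t : ℝ}

lemma rlKernel_pos (ha : 0 < a) (ht : 0 < t) : 0 < rlKernel a t :=
  div_pos (rpow_pos_of_pos ht _) (Gamma_pos_of_pos ha)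

lemma antitoneOn_rlKernel (ha : 0 < a) (ha₁ : a ≤ 1) : AntitoneOn (rlKernel a) (Ioi 0) :=
  fun _ hx _ _ hxy => div_le_div_of_nonneg_right
    (rpow_le_rpow_of_nonpos hx hxy (sub_nonpos.2 ha₁)) (Gamma_pos_of_pos ha).le

lemma convexOn_log_rlKernel (ha : 0 < a) (ha₁ : a ≤ 1) :
    ConvexOn ℝ (Ioi 0) (log ∘ rlKernel a) := by
  refine (((strictConcaveOn_log_Ioi.concaveOn.neg.smul (sub_nonneg.2 ha₁)).add_const
    (-log (Gamma a)))).congr fun x hx => ?_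
  have hx' : 0 < x := hx
  simp only [Function.comp_apply, rlKernel, Pi.add_apply, Pi.neg_apply, smul_eq_mul]
  rw [log_div (rpow_pos_of_pos hx' _).ne' (Gamma_pos_of_pos ha).ne', log_rpow hx']
  ring

lemma intervalIntegrable_rlKernel (ha : 0 < a) : IntervalIntegrable (rlKernel a) volume 0 t :=
  (intervalIntegrable_rpow' (by linarith)).div_const _

lemma integral_rlKernel_mul_rlKernel_sub (ha : 0 < a) (hb : 0 < b) (ht : 0 < t) :
    ∫ s in 0..t, rlKernel a s * rlKernel b (t - s) = rlKernel (a + b) t := by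
  have hΓa := (Gamma_pos_of_pos ha).ne'
  have hΓb := (Gamma_pos_of_pos hb).ne'
  simp only [rlKernel, div_mul_div_comm]
  rw [intervalIntegral.integral_div, integral_rpow_mul_sub_rpow ha hb ht]
  field_simp

lemma intervalIntegrable_rlKernel_mul_rlKernel_sub (ha : 0 < a) (hb : 0 < b) (ht : 0 < t) :
    IntervalIntegrable (fun s => rlKernel a s * rlKernel b (t - s)) volume 0 t := by
  refine intervalIntegrable_of_integral_ne_zero ?_
  rw [integral_rlKernel_mul_rlKernel_sub ha hb ht]
  exact (rlKernel_pos (add_pos ha hb) ht).ne'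

end RiemannLiouville

lemma integral_tsum_const_mul_of_nonneg {ι : Type*} [Countable ι] {c : ι → ℝ} {g : ι → ℝ → ℝ}
    {a b : ℝ} (hab : a ≤ b) (hint : ∀ i, IntervalIntegrable (g i) volume a b)
    (hg : ∀ i, ∀ s ∈ Ioo a b, 0 ≤ g i s) (hsum : Summable fun i => |c i| * ∫ s in a..b, g i s) :
    ∫ s in a..b, ∑' i, c i * g i s = ∑' i, c i * ∫ s in a..b, g i s := by
  simp only [intervalIntegral.integral_of_le hab, integral_Ioc_eq_integral_Ioo] at hsum ⊢
  simp only [← MeasureTheory.integral_const_mul] at hsum ⊢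
  refine (integral_tsum_of_summable_integral_norm (fun i =>
    ((intervalIntegrable_iff_integrableOn_Ioo_of_le hab).1 (hint i)).const_mul (c i))
    (hsum.congr fun i => setIntegral_congr_fun measurableSet_Ioo fun s hs => ?_)).symm
  simp [abs_of_nonneg (hg i s hs)]

/-! ### Mittag-Leffler kernels -/

/-- The kernel `t ^ (β - 1) * E_{α,β}(lam * t ^ α)`, whose expansion in powers of `lam` has the
Riemann–Liouville kernels of orders `k * α + β` as coefficients. -/
noncomputable def mittagLefflerKernel (α β lam t : ℝ) : ℝ :=
  t ^ (β - 1) * mittagLeffler α β (lam * t ^ α)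

lemma pow_mul_rlKernel {t : ℝ} (ht : 0 < t) (α β lam : ℝ) (k : ℕ) :
    lam ^ k * rlKernel (k * α + β) t =
      t ^ (β - 1) * ((lam * t ^ α) ^ k / Gamma (k * α + β)) := by
  rw [rlKernel, add_sub_assoc, rpow_natCast_mul_add ht, mul_pow]
  ring

lemma mittagLefflerKernel_eq_tsum {t : ℝ} (ht : 0 < t) (α β lam : ℝ) :
    mittagLefflerKernel α β lam t = ∑' k : ℕ, lam ^ k * rlKernel (k * α + β) t := by
  simp only [pow_mul_rlKernel ht, tsum_mul_left, mittagLefflerKernel, mittagLeffler]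

lemma mittagLefflerKernel_eq_rlKernel_mul {β : ℝ} (hβ : 0 < β) (α lam t : ℝ) :
    mittagLefflerKernel α β lam t =
      rlKernel β t * (Gamma β * mittagLeffler α β (lam * t ^ α)) := by
  have hΓ := (Gamma_pos_of_pos hβ).ne'
  rw [mittagLefflerKernel, rlKernel]
  field_simp

section MittagLefflerKernel

variable {α β γ t : ℝ} (hα : 0 < α)

include hα

lemma summable_pow_mul_rlKernel (ht : 0 < t) (β lam : ℝ) :
    Summable fun k : ℕ => lam ^ k * rlKernel (k * α + β) t := by
  simp only [pow_mul_rlKernel ht]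
  exact (summable_pow_div_Gamma hα β _).mul_left _

lemma mittagLefflerKernel_eq_rlKernel_add (ht : 0 < t) (β lam : ℝ) :
    mittagLefflerKernel α β lam t =
      rlKernel β t + lam * mittagLefflerKernel α (β + α) lam t := by
  rw [mittagLefflerKernel, mittagLeffler_eq_one_div_Gamma_add hα, mittagLefflerKernel, rlKernel,
    add_sub_right_comm, rpow_add ht]
  ring

lemma integral_rlKernel_sub_mul_mittagLefflerKernel (hβ : 0 < β) (hγ : 0 < γ) (ht : 0 < t)
    (lam : ℝ) : ∫ s in 0..t, rlKernel γ (t - s) * mittagLefflerKernel α β lam s =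
      mittagLefflerKernel α (β + γ) lam t := by
  have hint (k : ℕ) : ∫ s in 0..t, rlKernel (k * α + β) s * rlKernel γ (t - s) =
      rlKernel (k * α + (β + γ)) t := by
    rw [integral_rlKernel_mul_rlKernel_sub (by positivity) hγ ht, add_assoc]
  calc ∫ s in 0..t, rlKernel γ (t - s) * mittagLefflerKernel α β lam s =
        ∫ s in 0..t, ∑' k : ℕ, lam ^ k * (rlKernel (k * α + β) s * rlKernel γ (t - s)) := by
        refine integral_congr_Ioo_of_le ht.le fun s hs => ?_
        rw [mittagLefflerKernel_eq_tsum hs.1, ← tsum_mul_left]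
        exact tsum_congr fun k => by ring
    _ = ∑' k : ℕ, lam ^ k * ∫ s in 0..t, rlKernel (k * α + β) s * rlKernel γ (t - s) := by
        refine integral_tsum_const_mul_of_nonneg ht.le
          (fun k => intervalIntegrable_rlKernel_mul_rlKernel_sub (by positivity) hγ ht)
          (fun k s hs => (mul_pos (rlKernel_pos (by positivity) hs.1)
            (rlKernel_pos hγ (sub_pos.2 hs.2))).le) ?_
        simpa only [hint, abs_pow] using summable_pow_mul_rlKernel hα ht (β + γ) |lam|
    _ = mittagLefflerKernel α (β + γ) lam t := by
        simp only [hint, mittagLefflerKernel_eq_tsum ht]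

lemma mittagLefflerKernel_mul_eq_tsum_sum_antidiagonal {s : ℝ} (hs : 0 < s) (ht : 0 < t)
    (β γ lam : ℝ) : mittagLefflerKernel α β lam s * mittagLefflerKernel α γ lam t =
      ∑' n : ℕ, lam ^ n * ∑ p ∈ antidiagonal n,
        rlKernel (p.1 * α + β) s * rlKernel (p.2 * α + γ) t := by
  rw [mittagLefflerKernel_eq_tsum hs, mittagLefflerKernel_eq_tsum ht,
    tsum_mul_tsum_eq_tsum_sum_antidiagonal_of_summable_norm
      (summable_pow_mul_rlKernel hα hs β lam).norm (summable_pow_mul_rlKernel hα ht γ lam).norm]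
  refine tsum_congr fun n => ?_
  rw [Finset.mul_sum]
  refine Finset.sum_congr rfl fun p hp => ?_
  rw [mul_mul_mul_comm, ← pow_add, mem_antidiagonal.1 hp]

lemma integral_sum_antidiagonal_rlKernel (hβ : 0 < β) (hγ : 0 < γ) (ht : 0 < t) (n : ℕ) :
    ∫ s in 0..t, ∑ p ∈ antidiagonal n,
        rlKernel (p.1 * α + β) s * rlKernel (p.2 * α + γ) (t - s) =
      (n + 1) * rlKernel (n * α + (β + γ)) t := by
  rw [intervalIntegral.integral_finsetSum fun p _ =>
    intervalIntegrable_rlKernel_mul_rlKernel_sub (by positivity) (by positivity) ht]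
  have hterm : ∀ p ∈ antidiagonal n,
      ∫ s in 0..t, rlKernel (p.1 * α + β) s * rlKernel (p.2 * α + γ) (t - s) =
        rlKernel (n * α + (β + γ)) t := fun p hp => by
    rw [integral_rlKernel_mul_rlKernel_sub (by positivity) (by positivity) ht,
      ← mem_antidiagonal.1 hp]
    push_cast
    congr 1
    ring
  rw [Finset.sum_congr rfl hterm]
  simp

lemma integral_mittagLefflerKernel_mul_comp_sub (hβ : 0 < β) (hγ : 0 < γ) (ht : 0 < t) (lam : ℝ) :
    ∫ s in 0..t, mittagLefflerKernel α β lam s * mittagLefflerKernel α γ lam (t - s) =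
      t ^ (β + γ - 1) * ∑' n : ℕ, (n + 1) * ((lam * t ^ α) ^ n / Gamma (n * α + (β + γ))) := by
  have hterm (l : ℝ) (n : ℕ) : l ^ n * ((n + 1) * rlKernel (n * α + (β + γ)) t) =
      t ^ (β + γ - 1) * ((n + 1) * ((l * t ^ α) ^ n / Gamma (n * α + (β + γ)))) := by
    rw [mul_left_comm, pow_mul_rlKernel ht, mul_left_comm]
  rw [integral_congr_Ioo_of_le ht.le fun s hs =>
    mittagLefflerKernel_mul_eq_tsum_sum_antidiagonal hα hs.1 (sub_pos.2 hs.2) β γ lam,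
    integral_tsum_const_mul_of_nonneg ht.le]
  · simp only [integral_sum_antidiagonal_rlKernel hα hβ hγ ht, hterm, tsum_mul_left]
  · intro n
    simpa only [Finset.sum_fn] using IntervalIntegrable.sum _ fun (p : ℕ × ℕ) _ =>
      intervalIntegrable_rlKernel_mul_rlKernel_sub (a := p.1 * α + β) (b := p.2 * α + γ)
        (by positivity) (by positivity) ht
  · exact fun n s hs => Finset.sum_nonneg fun p _ =>
      (mul_pos (rlKernel_pos (by positivity) hs.1)
        (rlKernel_pos (by positivity) (sub_pos.2 hs.2))).le
  · simp only [integral_sum_antidiagonal_rlKernel hα hβ hγ ht, abs_pow, hterm]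
    exact (summable_add_one_mul_pow_div_Gamma hα _ _).mul_left _

theorem hasDerivAt_mittagLefflerKernel (hβ : 0 < β) (ht : 0 < t) (lam : ℝ) :
    HasDerivAt (mittagLefflerKernel α β lam)
      (((β - 1) * mittagLefflerKernel α β lam t + α * lam *
        ∫ s in 0..t, mittagLefflerKernel α β lam s * mittagLefflerKernel α α lam (t - s)) / t)
      t := by
  have hpow (c : ℝ) : HasDerivAt (fun t : ℝ => t ^ c) (c * t ^ (c - 1)) t :=
    hasDerivAt_rpow_const (Or.inl ht.ne')
  have h := (hpow (β - 1)).mul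
    ((hasDerivAt_mittagLeffler hα β (lam * t ^ α)).comp t ((hpow α).const_mul lam))
  convert! h using 1
  rw [integral_mittagLefflerKernel_mul_comp_sub hα hβ hα ht, mittagLefflerKernel,
    add_sub_right_comm, rpow_add ht, rpow_sub_one ht.ne' (β - 1), rpow_sub_one ht.ne' α]
  simp only [Function.comp_apply]
  field_simp

lemma continuousOn_mittagLefflerKernel (hβ : 0 < β) (lam : ℝ) :
    ContinuousOn (mittagLefflerKernel α β lam) (Ioi 0) := fun _ ht =>
  (hasDerivAt_mittagLefflerKernel hα hβ ht lam).continuousAt.continuousWithinAt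

lemma continuous_mittagLeffler_mul_rpow (β lam : ℝ) :
    Continuous fun t : ℝ => mittagLeffler α β (lam * t ^ α) :=
  (continuous_mittagLeffler hα β).comp ((continuous_rpow_const hα.le).const_mul lam)

lemma intervalIntegrable_mittagLefflerKernel (hβ : 0 < β) (lam : ℝ) :
    IntervalIntegrable (mittagLefflerKernel α β lam) volume 0 t :=
  (intervalIntegrable_rpow' (by linarith)).mul_continuousOn
    (continuous_mittagLeffler_mul_rpow hα β lam).continuousOn

lemma intervalIntegrable_rlKernel_sub_mul_mittagLefflerKernel (hβ : 0 < β) (hγ : 0 < γ)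
    (ht : 0 < t) (lam : ℝ) :
    IntervalIntegrable (fun s => rlKernel γ (t - s) * mittagLefflerKernel α β lam s)
      volume 0 t := by
  have hcont := (continuous_mittagLeffler_mul_rpow hα β lam).const_mul (Gamma β)
  refine ((intervalIntegrable_rlKernel_mul_rlKernel_sub hβ hγ ht).mul_continuousOn
    hcont.continuousOn).congr fun s _ => ?_
  simp only [mittagLefflerKernel_eq_rlKernel_mul hβ]
  ring

lemma intervalIntegrable_mittagLefflerKernel_mul_comp_sub (hβ : 0 < β) (hγ : 0 < γ)
    (ht : 0 < t) (lam : ℝ) :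
    IntervalIntegrable
      (fun s => mittagLefflerKernel α β lam s * mittagLefflerKernel α γ lam (t - s))
      volume 0 t := by
  have hcont := ((continuous_mittagLeffler_mul_rpow hα γ lam).const_mul (Gamma γ)).comp
    (continuous_sub_left t)
  refine ((intervalIntegrable_rlKernel_sub_mul_mittagLefflerKernel hα hβ hγ ht
    lam).mul_continuousOn hcont.continuousOn).congr fun s _ => ?_
  simp only [mittagLefflerKernel_eq_rlKernel_mul hγ, Function.comp_apply]
  ring

lemma eventually_mittagLefflerKernel_pos (hβ : 0 < β) (lam : ℝ) :
    ∀ᶠ t in 𝓝[>] 0, 0 < mittagLefflerKernel α β lam t := by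
  have hzero : 0 < mittagLeffler α β (lam * 0 ^ α) := by
    rw [zero_rpow hα.ne', mul_zero, mittagLeffler_zero]
    exact one_div_pos.2 (Gamma_pos_of_pos hβ)
  filter_upwards [self_mem_nhdsWithin, nhdsWithin_le_nhds
    ((continuous_mittagLeffler_mul_rpow hα β lam).continuousAt.eventually_const_lt hzero)]
    with t ht hE
  exact mul_pos (rpow_pos_of_pos ht _) hE

theorem isVolterraResolvent_mittagLefflerKernel (lam : ℝ) :
    IsVolterraResolvent (rlKernel α) lam (mittagLefflerKernel α α (-lam)) where
  continuousOn := continuousOn_mittagLefflerKernel hα hα (-lam)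
  intervalIntegrable _ ht :=
    intervalIntegrable_rlKernel_sub_mul_mittagLefflerKernel hα hα hα ht (-lam)
  eq_sub t ht := by
    rw [integral_rlKernel_sub_mul_mittagLefflerKernel hα hα hα ht,
      mittagLefflerKernel_eq_rlKernel_add hα ht, neg_mul, sub_eq_add_neg]

end MittagLefflerKernel

/-! ### Decay of the resolvent -/

lemma div_one_add_mul_le_div_one_add_mul {c x y : ℝ} (hc : 0 ≤ c) (hx : 0 ≤ x) (hxy : x ≤ y) :
    x / (1 + c * x) ≤ y / (1 + c * y) := by
  have hy := hx.trans hxy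
  rw [div_le_div_iff₀ (by positivity) (by positivity)]
  linarith

section Decay

variable {α lam t : ℝ} (hα : 0 < α) (hα₁ : α ≤ 1) (hlam : 0 ≤ lam)

include hα hα₁ hlam

theorem mittagLefflerKernel_pos (ht : 0 < t) : 0 < mittagLefflerKernel α α (-lam) t :=
  (isVolterraResolvent_mittagLefflerKernel hα lam).pos hlam (fun _ => rlKernel_pos hα)
    (convexOn_log_rlKernel hα hα₁) (fun _ _ => intervalIntegrable_rlKernel hα)
    (eventually_mittagLefflerKernel_pos hα hα (-lam)) ht

lemma mittagLefflerKernel_le_rlKernel (ht : 0 < t) :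
    mittagLefflerKernel α α (-lam) t ≤ rlKernel α t :=
  (isVolterraResolvent_mittagLefflerKernel hα lam).le_kernel hlam (fun _ => rlKernel_pos hα)
    (fun _ hs => (mittagLefflerKernel_pos hα hα₁ hlam hs.1).le) ht

lemma mul_integral_mittagLefflerKernel_le_one (ht : 0 < t) :
    lam * ∫ s in 0..t, mittagLefflerKernel α α (-lam) s ≤ 1 :=
  (isVolterraResolvent_mittagLefflerKernel hα lam).mul_integral_le_one hlam
    (fun _ => rlKernel_pos hα) (antitoneOn_rlKernel hα hα₁)
    (intervalIntegrable_mittagLefflerKernel hα hα (-lam))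
    (fun _ hs => (mittagLefflerKernel_pos hα hα₁ hlam hs.1).le) ht

lemma deriv_mittagLefflerKernel_nonpos (ht : 0 < t) :
    deriv (mittagLefflerKernel α α (-lam)) t ≤ 0 := by
  have hpos := fun s => mittagLefflerKernel_pos (t := s) hα hα₁ hlam
  have hconv := intervalIntegral_pos_of_pos_on
    (intervalIntegrable_mittagLefflerKernel_mul_comp_sub hα hα hα ht (-lam))
    (fun s hs => mul_pos (hpos s hs.1) (hpos (t - s) (sub_pos.2 hs.2))) ht
  rw [(hasDerivAt_mittagLefflerKernel hα hα ht (-lam)).deriv]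
  exact div_nonpos_of_nonpos_of_nonneg (add_nonpos
    (mul_nonpos_of_nonpos_of_nonneg (sub_nonpos.2 hα₁) (hpos t ht).le)
    (mul_nonpos_of_nonpos_of_nonneg
      (mul_nonpos_of_nonneg_of_nonpos hα.le (neg_nonpos.2 hlam)) hconv.le)) ht.le

theorem antitoneOn_mittagLefflerKernel : AntitoneOn (mittagLefflerKernel α α (-lam)) (Ioi 0) :=
  antitoneOn_of_deriv_nonpos (convex_Ioi 0) (continuousOn_mittagLefflerKernel hα hα (-lam))
    (fun _ ht => (hasDerivAt_mittagLefflerKernel hα hα (interior_subset ht)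
      (-lam)).differentiableAt.differentiableWithinAt)
    fun _ ht => deriv_mittagLefflerKernel_nonpos hα hα₁ hlam (interior_subset ht)

lemma mul_mul_mittagLefflerKernel_le_one (ht : 0 < t) :
    lam * (t * mittagLefflerKernel α α (-lam) t) ≤ 1 := by
  have hmono : t * mittagLefflerKernel α α (-lam) t ≤
      ∫ s in 0..t, mittagLefflerKernel α α (-lam) s := by
    calc t * mittagLefflerKernel α α (-lam) t =
          ∫ _ in 0..t, mittagLefflerKernel α α (-lam) t := by simp
      _ ≤ ∫ s in 0..t, mittagLefflerKernel α α (-lam) s :=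
          integral_mono_on_of_le_Ioo ht.le intervalIntegrable_const
            (intervalIntegrable_mittagLefflerKernel hα hα (-lam))
            fun s hs => antitoneOn_mittagLefflerKernel hα hα₁ hlam hs.1 ht hs.2.le
  exact (mul_le_mul_of_nonneg_left hmono hlam).trans
    (mul_integral_mittagLefflerKernel_le_one hα hα₁ hlam ht)

lemma mul_mittagLefflerKernel_le (ht : 0 < t) :
    t * mittagLefflerKernel α α (-lam) t ≤
      (1 / Gamma α + 1) * (t ^ α / (1 + lam * t ^ α)) := by
  have hsmall : t * mittagLefflerKernel α α (-lam) t ≤ t ^ α / Gamma α := by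
    calc t * mittagLefflerKernel α α (-lam) t ≤ t * rlKernel α t := by
          gcongr
          exact mittagLefflerKernel_le_rlKernel hα hα₁ hlam ht
      _ = t ^ α / Gamma α := by rw [rlKernel, rpow_sub_one ht.ne']; field_simp
  have hlarge := mul_mul_mittagLefflerKernel_le_one hα hα₁ hlam ht
  rw [← mul_div_assoc, le_div_iff₀ (by positivity)]
  calc t * mittagLefflerKernel α α (-lam) t * (1 + lam * t ^ α) =
        t * mittagLefflerKernel α α (-lam) t +
          lam * (t * mittagLefflerKernel α α (-lam) t) * t ^ α := by ring
    _ ≤ t ^ α / Gamma α + 1 * t ^ α := by gcongr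
    _ = (1 / Gamma α + 1) * t ^ α := by ring

lemma mul_integral_mittagLefflerKernel_mul_comp_sub_le (ht : 0 < t) :
    lam * ∫ s in 0..t,
        mittagLefflerKernel α α (-lam) s * mittagLefflerKernel α α (-lam) (t - s) ≤
      2 * mittagLefflerKernel α α (-lam) (t / 2) := by
  have hconv := integral_mul_comp_sub_le_of_antitoneOn ht
    (antitoneOn_mittagLefflerKernel hα hα₁ hlam)
    (fun _ hs => (mittagLefflerKernel_pos hα hα₁ hlam hs).le)
    (intervalIntegrable_mittagLefflerKernel hα hα (-lam))
    (intervalIntegrable_mittagLefflerKernel_mul_comp_sub hα hα hα ht (-lam))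
  have hF := mittagLefflerKernel_pos hα hα₁ hlam (half_pos ht)
  have hmass := mul_integral_mittagLefflerKernel_le_one hα hα₁ hlam ht
  set F := mittagLefflerKernel α α (-lam)
  calc lam * ∫ s in 0..t, F s * F (t - s) ≤ lam * (2 * F (t / 2) * ∫ s in 0..t, F s) := by gcongr
    _ = 2 * F (t / 2) * (lam * ∫ s in 0..t, F s) := by ring
    _ ≤ 2 * F (t / 2) := mul_le_of_le_one_right (by positivity) hmass

theorem abs_deriv_mittagLefflerKernel_le (ht : 0 < t) :
    |deriv (mittagLefflerKernel α α (-lam)) t| ≤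
      2 * mittagLefflerKernel α α (-lam) (t / 2) / t := by
  rw [abs_of_nonpos (deriv_mittagLefflerKernel_nonpos hα hα₁ hlam ht),
    (hasDerivAt_mittagLefflerKernel hα hα ht (-lam)).deriv, ← neg_div]
  have hconv := mul_integral_mittagLefflerKernel_mul_comp_sub_le hα hα₁ hlam ht
  have hhalf := antitoneOn_mittagLefflerKernel hα hα₁ hlam (half_pos ht) ht (half_le_self ht.le)
  have hF := mittagLefflerKernel_pos hα hα₁ hlam (half_pos ht)
  set F := mittagLefflerKernel α α (-lam)
  gcongr
  calc -((α - 1) * F t + α * -lam * ∫ s in 0..t, F s * F (t - s)) =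
        (1 - α) * F t + α * (lam * ∫ s in 0..t, F s * F (t - s)) := by ring
    _ ≤ (1 - α) * F (t / 2) + α * (2 * F (t / 2)) := by
        have := sub_nonneg.2 hα₁
        gcongr
    _ ≤ 2 * F (t / 2) := by nlinarith

theorem abs_deriv_mittagLefflerKernel_le_rpow_div (ht : 0 < t) :
    |deriv (mittagLefflerKernel α α (-lam)) t| ≤
      4 * (1 / Gamma α + 1) * (t ^ (α - 2) / (1 + lam * t ^ α)) := by
  have := Gamma_pos_of_pos hα
  have hhalf : (t / 2) ^ α / (1 + lam * (t / 2) ^ α) ≤ t ^ α / (1 + lam * t ^ α) :=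
    div_one_add_mul_le_div_one_add_mul hlam (by positivity)
      (rpow_le_rpow (by positivity) (half_le_self ht.le) hα.le)
  calc |deriv (mittagLefflerKernel α α (-lam)) t| ≤
        2 * mittagLefflerKernel α α (-lam) (t / 2) / t :=
        abs_deriv_mittagLefflerKernel_le hα hα₁ hlam ht
    _ = 4 / t ^ 2 * (t / 2 * mittagLefflerKernel α α (-lam) (t / 2)) := by field_simp; ring
    _ ≤ 4 / t ^ 2 * ((1 / Gamma α + 1) * (t ^ α / (1 + lam * t ^ α))) := by
        gcongr ?_ * ?_
        exact (mul_mittagLefflerKernel_le hα hα₁ hlam (half_pos ht)).trans (by gcongr)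
    _ = 4 * (1 / Gamma α + 1) * (t ^ (α - 2) / (1 + lam * t ^ α)) := by
        rw [rpow_sub ht, rpow_two]
        field_simp

end Decay

lemma intervalIntegrable_rpow_div_one_add_mul_rpow {lam s t : ℝ} (hlam : 0 ≤ lam) (hs : 0 < s)
    (ht : 0 < t) (α β : ℝ) :
    IntervalIntegrable (fun r => r ^ β / (1 + lam * r ^ α)) volume s t := by
  refine ContinuousOn.intervalIntegrable fun r hr => ?_
  have hr₀ : 0 < r := (lt_min hs ht).trans_le hr.1
  have hpow (c : ℝ) : ContinuousAt (fun r : ℝ => r ^ c) r :=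
    continuousAt_rpow_const r c (Or.inl hr₀.ne')
  refine ((hpow β).div (continuousAt_const.add ((hpow α).const_mul lam)) ?_).continuousWithinAt
  have hden : 0 < 1 + lam * r ^ α := by positivity
  exact hden.ne'

theorem mittagLeffler_diff_bound (α : ℝ) (hα0 : 0 < α) (hα1 : α < 1) :
    ∃ C : ℝ, 0 < C ∧ ∀ lam : ℝ, 0 < lam → ∀ s t : ℝ, 0 < s → s < t →
      |t ^ (α - 1) * mittagLeffler α α (-lam * t ^ α)
          - s ^ (α - 1) * mittagLeffler α α (-lam * s ^ α)|
        ≤ C * ∫ r in s..t, r ^ (α - 2) / (1 + lam * r ^ α) := by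
  have := Gamma_pos_of_pos hα0
  refine ⟨4 * (1 / Gamma α + 1), by positivity, fun lam hlam s t hs hst => ?_⟩
  rw [← intervalIntegral.integral_const_mul]
  exact norm_sub_le_integral_of_norm_deriv_le_of_le (f := mittagLefflerKernel α α (-lam)) hst.le
    ((continuousOn_mittagLefflerKernel hα0 hα0 _).mono fun r hr => hs.trans_le hr.1)
    (fun r hr => (hasDerivAt_mittagLefflerKernel hα0 hα0 (hs.trans hr.1)
      _).differentiableAt.differentiableWithinAt)
    (Eventually.of_forall fun r hr =>
      abs_deriv_mittagLefflerKernel_le_rpow_div hα0 hα1.le hlam.le (hs.trans hr.1))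
    ((intervalIntegrable_rpow_div_one_add_mul_rpow hlam.le hs (hs.trans hst) α _).const_mul _)
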